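/- Let p be an odd prime, let ε ∈ {−1,1}, and let k and m be positive integers. Suppose x is an integer that is a nonzero p-th power modulo p² and satisfies x^k ≡ −ε·(1−x)^m (mod p²). Let u be an integer with u(1−x) ≡ 1 (mod p²), and let n be any positive integer with n > m and n ≡ (m−k)p − m·u·(p−1) (mod p(p−1)). Then p² divides D_ε(n,m). -/

import Mathlib

/-- `D_ε(n,m) = n^n + ε·(n−m)^(n−m)·m^m` for `ε ∈ {−1,1}` and integers `n > m ≥ 1`. -/
def trinomialD (ε : ℤ) (n m : ℕ) : ℤ :=
  (n : ℤ) ^ n + ε * ((n - m : ℕ) : ℤ) ^ (n - m) * (m : ℤ) ^ m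

theorem aux_pow {R : Type*} [CommRing R] (y q : R) (hq : q * q = 0) (b : ℕ) :
    (y + q) ^ (b + 1) = y ^ (b + 1) + ((b + 1 : ℕ) : R) * y ^ b * q := by
  induction b with
  | zero => simp
  | succ b ih =>
    rw [pow_succ, ih]
    push_cast
    linear_combination ((b : R) + 1) * y ^ b * hq

theorem aux_ring {R : Type*} [CommRing R] (x q n e : R) (a m : ℕ) (k : ℕ) (hq : q * q = 0)
    (ha : ((a + 1 : ℕ) : R) = n * x - q) (hm : ((m + 1 : ℕ) : R) = n * (1 - x) + q)
    (he : e * e = 1) (hx : x ^ (a + 1 + k) = 1) (hc : x ^ k = - e * (1 - x) ^ (m + 1)) :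
    n ^ (a + 1 + (m + 1)) + e * ((a + 1 : ℕ) : R) ^ (a + 1) * ((m + 1 : ℕ) : R) ^ (m + 1) = 0 := by
  have h1 : ((a + 1 : ℕ) : R) ^ (a + 1) =
      (n * x) ^ (a + 1) + (n * x - q) * (n * x) ^ a * (-q) := by
    have := aux_pow (n * x) (-q) (by simpa using hq) a
    rw [ha] at this
    rw [ha, ← this]; ring
  have h2 : ((m + 1 : ℕ) : R) ^ (m + 1) =
      (n * (1 - x)) ^ (m + 1) + (n * (1 - x) + q) * (n * (1 - x)) ^ m * q := by
    have := aux_pow (n * (1 - x)) q hq m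
    rw [hm] at this
    rw [hm, ← this]
  have h3 : ((a + 1 : ℕ) : R) ^ (a + 1) * ((m + 1 : ℕ) : R) ^ (m + 1) =
      (n * x) ^ (a + 1) * (n * (1 - x)) ^ (m + 1) := by
    rw [h1, h2]
    generalize hY : n * x = Y
    generalize hZ : n * (1 - x) = Z
    linear_combination (Y ^ (a + 1) * Z ^ m - (Y - q) * Y ^ a * (Z + q) * Z ^ m
      + Y ^ a * Z ^ (m + 1)) * hq
  have h4 : x ^ (a + 1) * (1 - x) ^ (m + 1) = - e := by
    rw [pow_add] at hx
    linear_combination (-e) * hx + e * x ^ (a + 1) * hc - x ^ (a + 1) * (1 - x) ^ (m + 1) * he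
  rw [mul_assoc, h3, mul_pow, mul_pow, pow_add]
  linear_combination e * n ^ (a + 1) * n ^ (m + 1) * h4 - n ^ (a + 1) * n ^ (m + 1) * he

/-- Let `p` be an odd prime, `ε ∈ {−1,1}`, and `k, m` positive integers.  Suppose
`x` is a nonzero `p`-th power modulo `p²` with `x^k ≡ −ε·(1−x)^m (mod p²)`.  If
`u·(1−x) ≡ 1 (mod p²)` and `n > m` is a positive integer with
`n ≡ (m−k)p − m·u·(p−1) (mod p(p−1))`, then `p² ∣ D_ε(n,m)`. -/
theorem going_the_other_way (p : ℕ) (hp : p.Prime) (hodd : Odd p)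
    (ε : ℤ) (hε : ε = 1 ∨ ε = -1) (k m : ℕ) (hk : 0 < k) (hm : 0 < m)
    (x : ℤ) (hpx : ¬ (p : ℤ) ∣ x) (hxpow : ∃ a : ℤ, x ≡ a ^ p [ZMOD ((p : ℤ) ^ 2)])
    (hcong : x ^ k ≡ -ε * (1 - x) ^ m [ZMOD ((p : ℤ) ^ 2)])
    (u : ℤ) (hu : u * (1 - x) ≡ 1 [ZMOD ((p : ℤ) ^ 2)])
    (n : ℕ) (hmn : m < n)
    (hn : (n : ℤ) ≡ ((m : ℤ) - (k : ℤ)) * p - (m : ℤ) * u * ((p : ℤ) - 1)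
      [ZMOD ((p : ℤ) * ((p : ℤ) - 1))]) :
    (p : ℤ) ^ 2 ∣ trinomialD ε n m := by
  obtain ⟨a, rfl⟩ : ∃ a, n = a + 1 + m := ⟨n - m - 1, by omega⟩
  obtain ⟨m, rfl⟩ : ∃ b, m = b + 1 := ⟨m - 1, by omega⟩
  have hdp : (p : ℤ) ∣ ((a + 1 + (m + 1) : ℕ) : ℤ) * x - ((a + 1 : ℕ) : ℤ) := by
    obtain ⟨c, hc⟩ := hn.dvd
    obtain ⟨d, hd⟩ := hu.dvd
    push_cast at hc ⊢
    refine ⟨(1 - x) * (c * (p - 1)) - (1 - x) * (m + 1 - k) + (1 - x) * (m + 1) * u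
      + (m + 1) * p * d, ?_⟩
    linear_combination (1 - x) * hc + ((m : ℤ) + 1) * hd
  have hdk : ((p : ℤ) - 1) ∣ ((a + 1 + k : ℕ) : ℤ) := by
    obtain ⟨c, hc⟩ := hn.dvd
    push_cast at hc ⊢
    refine ⟨(m + 1 - k) - (m + 1) * u - p * c, ?_⟩
    linear_combination -hc
  have hdk' : (p - 1) ∣ (a + 1 + k) := by
    have := hp.one_lt
    zify
    rw [Nat.cast_sub hp.one_lt.le]
    exact_mod_cast hdk
  have cast_eq : ∀ {s t : ℤ}, s ≡ t [ZMOD ((p : ℤ) ^ 2)] → (s : ZMod (p ^ 2)) = t := by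
    intro s t h
    rw [ZMod.intCast_eq_intCast_iff]
    exact_mod_cast h
  have hx1 : (x : ZMod (p ^ 2)) ^ (a + 1 + k) = 1 := by
    obtain ⟨A, hA⟩ := hxpow
    have hpA : ¬ (p : ℤ) ∣ A := by
      intro h
      apply hpx
      have h1 : (p : ℤ) ∣ x - A ^ p :=
        (dvd_pow_self (p : ℤ) two_ne_zero).trans hA.symm.dvd
      have h2 : (p : ℤ) ∣ A ^ p := h.trans (dvd_pow_self A hp.ne_zero)
      simpa using dvd_add h1 h2
    have hcop : IsCoprime A ((p ^ 2 : ℕ) : ℤ) := by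
      push_cast
      apply IsCoprime.pow_right
      exact ((Nat.prime_iff_prime_int.mp hp).coprime_iff_not_dvd.mpr hpA).symm
    have hA1 : (A : ZMod (p ^ 2)) ^ (p * (p - 1)) = 1 := by
      have hun : IsUnit (A : ZMod (p ^ 2)) := by
        obtain ⟨r, s, hrs⟩ := hcop
        have := congrArg (Int.cast : ℤ → ZMod (p ^ 2)) hrs
        push_cast at this
        have h0 : (p : ZMod (p ^ 2)) ^ 2 = 0 := by
          exact_mod_cast ZMod.natCast_self (p ^ 2)
        rw [h0, mul_zero, add_zero] at this
        exact IsUnit.of_mul_eq_one_right _ this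
      obtain ⟨v, hv⟩ := hun
      have h := ZMod.pow_totient v
      rw [Nat.totient_prime_pow hp (by norm_num)] at h
      rw [← hv, ← Units.val_pow_eq_pow_val]
      simp only [Nat.add_one_sub_one, pow_one] at h
      rw [h]; rfl
    obtain ⟨c, hc⟩ := hdk'
    have := cast_eq hA
    push_cast at this
    rw [this, hc, ← pow_mul, ← mul_assoc, pow_mul, hA1, one_pow]
  have hc1 := cast_eq hcong
  push_cast at hc1
  obtain ⟨t, ht⟩ := hdp
  have ht' := congrArg (Int.cast : ℤ → ZMod (p ^ 2)) ht
  have h0 : (p : ZMod (p ^ 2)) ^ 2 = 0 := by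
    exact_mod_cast ZMod.natCast_self (p ^ 2)
  have key := aux_ring (x : ZMod (p ^ 2)) ((p : ZMod (p ^ 2)) * t)
    ((a + 1 + (m + 1) : ℕ) : ZMod (p ^ 2)) (ε : ZMod (p ^ 2)) a m k
    (by linear_combination (t : ZMod (p ^ 2)) ^ 2 * h0)
    (by push_cast at ht' ⊢; linear_combination -ht')
    (by push_cast at ht' ⊢; linear_combination ht')
    (by rcases hε with rfl | rfl <;> simp)
    hx1 hc1
  have hz : ((trinomialD ε (a + 1 + (m + 1)) (m + 1) : ℤ) : ZMod (p ^ 2)) = 0 := by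
    unfold trinomialD
    rw [Nat.add_sub_cancel, ← key]
    push_cast
    rfl
  have := (ZMod.intCast_zmod_eq_zero_iff_dvd _ (p ^ 2)).mp hz
  exact_mod_cast this
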